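/- For w ∈ ℂ, the integral of log|w − a| over the Riemann sphere with respect to the normalized spherical area element dρ(a) = (1/π)(1+|a|²)^{-2} dm(a) equals log√(1+|w|²). That is, (1/π) ∫_ℂ log|w − a| (1+|a|²)^{-2} dm(a) = (1/2) log(1+|w|²). -/

import Mathlib

open MeasureTheory Real

/-!
By Jensen's formula the mean of `log ‖· - w‖` over the circle `|a| = r` is `log (max r ‖w‖)`.
Integrating in polar coordinates gives Newton's theorem for the logarithmic potential at `w` of a
radial density: the mass in the disc `|a| ≤ |w|` acts as if concentrated at the origin, and each
circle `|a| = r` with `r > |w|` contributes its mass times `log r`. For the spherical density both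
radial integrals have elementary primitives.
-/

open Set Filter Topology

section PolarCoordinates

variable {E : Type*} [NormedAddCommGroup E]

lemma polarCoord_symm_eq_circleMap (p : ℝ × ℝ) :
    Complex.polarCoord.symm p = circleMap 0 p.1 p.2 := by
  simp [circleMap, Complex.exp_mul_I]

lemma circleIntegrable_iff_integrableOn_Ioo {f : ℂ → E} {c : ℂ} {r : ℝ} :
    CircleIntegrable f c r ↔ IntegrableOn (fun θ ↦ f (circleMap c r θ)) (Ioo (-π) π) := by
  have hper : Function.Periodic (fun θ ↦ f (circleMap c r θ)) (2 * π) :=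
    (periodic_circleMap c r).comp f
  rw [← integrableOn_Ioc_iff_integrableOn_Ioo,
    ← intervalIntegrable_iff_integrableOn_Ioc_of_le (by linarith [pi_pos])]
  refine ⟨fun h ↦ hper.intervalIntegrable₀ two_pi_pos.ne' h _ _, fun h ↦ ?_⟩
  exact hper.intervalIntegrable two_pi_pos.ne' (t := -π) (by convert h using 1; ring) _ _

variable [NormedSpace ℝ E]

lemma integral_Ioo_circleMap (f : ℂ → E) (c : ℂ) (r : ℝ) :
    ∫ θ in Ioo (-π) π, f (circleMap c r θ) = (2 * π) • circleAverage f c r := by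
  have hper : Function.Periodic (fun θ ↦ f (circleMap c r θ)) (2 * π) :=
    (periodic_circleMap c r).comp f
  rw [circleAverage, smul_inv_smul₀ two_pi_pos.ne', ← integral_Ioc_eq_integral_Ioo,
    ← intervalIntegral.integral_of_le (by linarith [pi_pos])]
  convert hper.intervalIntegral_add_eq (-π) 0 using 2 <;> ring

lemma integrable_iff_integrableOn_polar {f : ℂ → E} :
    Integrable f ↔
      IntegrableOn (fun p : ℝ × ℝ ↦ p.1 • f (circleMap 0 p.1 p.2)) (Ioi 0 ×ˢ Ioo (-π) π) := by
  have hsource : polarCoord.symm '' polarCoord.target =ᵐ[volume] univ :=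
    polarCoord.symm_image_target_eq_source ▸ polarCoord_source_ae_eq_univ
  rw [← Complex.volume_preserving_equiv_real_prod.symm.integrable_comp_emb
      Complex.measurableEquivRealProd.symm.measurableEmbedding,
    ← integrableOn_univ, ← integrableOn_congr_set_ae hsource,
    integrableOn_image_iff_integrableOn_abs_det_fderiv_smul volume
      polarCoord.open_target.measurableSet
      (fun p _ ↦ (hasFDerivAt_polarCoord_symm p).hasFDerivWithinAt) polarCoord.symm.injOn]
  refine integrableOn_congr_fun (fun p hp ↦ ?_) polarCoord.open_target.measurableSet
  rw [det_fderivPolarCoordSymm, abs_of_pos hp.1, Function.comp_apply,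
    Complex.measurableEquivRealProd_symm_polarCoord_symm_apply, polarCoord_symm_eq_circleMap]

lemma integrable_iff_circleAverage_norm {f : ℂ → E} (hf : StronglyMeasurable f) :
    Integrable f ↔ (∀ᵐ r ∂volume.restrict (Ioi 0), CircleIntegrable f 0 r) ∧
      IntegrableOn (fun r ↦ r * circleAverage (‖f ·‖) 0 r) (Ioi 0) := by
  have hmeas : StronglyMeasurable fun p : ℝ × ℝ ↦ p.1 • f (circleMap 0 p.1 p.2) :=
    measurable_fst.stronglyMeasurable.smul (hf.comp_measurable (by unfold circleMap; fun_prop))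
  rw [integrable_iff_integrableOn_polar, IntegrableOn, Measure.volume_eq_prod,
    ← Measure.prod_restrict, integrable_prod_iff hmeas.aestronglyMeasurable]
  refine and_congr (eventually_congr ?_) ?_
  · filter_upwards [ae_restrict_mem measurableSet_Ioi] with r hr
    rw [circleIntegrable_iff_integrableOn_Ioo, IntegrableOn,
      integrable_fun_smul_iff (ne_of_gt hr)]
  · refine (integrableOn_congr_fun (fun r hr ↦ ?_) measurableSet_Ioi).trans
      (integrable_const_mul_iff (isUnit_iff_ne_zero.2 two_pi_pos.ne') _)
    simp only [norm_smul, norm_of_nonneg (le_of_lt hr)]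
    rw [integral_const_mul, integral_Ioo_circleMap (‖f ·‖), smul_eq_mul, mul_left_comm]

theorem integral_eq_integral_circleAverage {f : ℂ → E} (hf : Integrable f) :
    ∫ z, f z = (2 * π) • ∫ r in Ioi (0 : ℝ), r • circleAverage f 0 r := by
  have hpolar := integrable_iff_integrableOn_polar.1 hf
  rw [Measure.volume_eq_prod] at hpolar
  rw [← Complex.integral_comp_polarCoord_symm, polarCoord_target, Measure.volume_eq_prod]
  simp only [polarCoord_symm_eq_circleMap]
  rw [setIntegral_prod _ hpolar, ← integral_smul]
  simp only [integral_smul, integral_Ioo_circleMap, smul_comm (2 * π)]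

lemma stronglyMeasurable_circleAverage {f : ℂ → E} (hf : StronglyMeasurable f) (c : ℂ) :
    StronglyMeasurable (circleAverage f c) := by
  have hmeas : StronglyMeasurable fun p : ℝ × ℝ ↦ f (circleMap c p.1 p.2) :=
    hf.comp_measurable (by unfold circleMap; fun_prop)
  unfold circleAverage
  simp only [intervalIntegral.integral_of_le two_pi_pos.le]
  exact hmeas.integral_prod_right'.const_smul _

lemma circleAverage_radial_smul (φ : ℝ → ℝ) (f : ℂ → E) (r : ℝ) :
    circleAverage (fun z ↦ φ ‖z‖ • f z) 0 r = φ |r| • circleAverage f 0 r := by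
  rw [← circleAverage_fun_smul]
  refine circleAverage_congr_sphere fun z hz ↦ ?_
  simp only [mem_sphere_zero_iff_norm.1 hz]

lemma circleIntegrable_radial_smul (φ : ℝ → ℝ) {f : ℂ → E} {r : ℝ}
    (hf : CircleIntegrable f 0 r) : CircleIntegrable (fun z ↦ φ ‖z‖ • f z) 0 r := by
  simp only [CircleIntegrable, norm_circleMap_zero]
  exact IntervalIntegrable.smul hf (φ |r|)

end PolarCoordinates

section LogarithmicPotential

lemma circleAverage_log_norm_sub (w : ℂ) {r : ℝ} (hr : 0 < r) :
    circleAverage (log ‖· - w‖) 0 r = log (max r ‖w‖) := by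
  rw [circleAverage_log_norm_sub_const_eq_log_radius_add_posLog hr.ne', zero_sub, norm_neg,
    posLog_eq_log_max_one (by positivity), ← log_mul hr.ne' (by positivity),
    mul_max_of_nonneg _ _ hr.le, mul_one, mul_inv_cancel_left₀ hr.ne']

lemma abs_log_eq_two_mul_posLog_sub_log (x : ℝ) : |log x| = 2 * log⁺ x - log x := by
  linarith [half_mul_log_add_log_abs (x := x)]

lemma circleAverage_abs_log_norm_sub_le (w : ℂ) {r : ℝ} (hr : 0 < r) :
    circleAverage (|log ‖· - w‖|) 0 r ≤ 2 * (log 2 + log⁺ ‖w‖) + |log r| := by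
  have hlog : CircleIntegrable (log ‖· - w‖) 0 r := circleIntegrable_log_norm_sub_const r
  set C := 2 * (log 2 + log⁺ r + log⁺ ‖w‖) with hC
  have hCint : CircleIntegrable (fun _ ↦ C) 0 r := circleIntegrable_const C 0 r
  have hpointwise : ∀ z ∈ Metric.sphere (0 : ℂ) |r|, |log ‖z - w‖| ≤ C - log ‖z - w‖ := by
    intro z hz
    rw [mem_sphere_zero_iff_norm, abs_of_pos hr] at hz
    have hposLog : log⁺ ‖z - w‖ ≤ log 2 + log⁺ r + log⁺ ‖w‖ :=
      (posLog_le_posLog (norm_nonneg _) (hz ▸ norm_sub_le z w)).trans posLog_add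
    rw [abs_log_eq_two_mul_posLog_sub_log, hC]
    linarith
  calc circleAverage (|log ‖· - w‖|) 0 r
      ≤ circleAverage (fun z ↦ C - log ‖z - w‖) 0 r :=
        circleAverage_mono hlog.abs (hCint.sub hlog) hpointwise
    _ = C - log (max r ‖w‖) := by
        rw [circleAverage_fun_sub hCint hlog, circleAverage_const, circleAverage_log_norm_sub w hr]
    _ ≤ C - log r := by gcongr; exact le_max_left _ _
    _ = 2 * (log 2 + log⁺ ‖w‖) + |log r| := by
        rw [abs_log_eq_two_mul_posLog_sub_log]
        ring

lemma integral_Ioi_mul_log_max {f : ℝ → ℝ} {ρ : ℝ} (hρ : 0 ≤ ρ) (hf : IntegrableOn f (Ioi 0))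
    (hflog : IntegrableOn (fun r ↦ f r * log r) (Ioi 0)) :
    ∫ r in Ioi 0, f r * log (max r ρ) =
      log ρ * (∫ r in Ioc 0 ρ, f r) + ∫ r in Ioi ρ, f r * log r := by
  have hinside : EqOn (fun r ↦ f r * log (max r ρ)) (fun r ↦ log ρ * f r) (Ioc 0 ρ) :=
    fun r hr ↦ by simp only [max_eq_right hr.2, mul_comm]
  have houtside : EqOn (fun r ↦ f r * log (max r ρ)) (fun r ↦ f r * log r) (Ioi ρ) :=
    fun r (hr : ρ < r) ↦ by simp only [max_eq_left hr.le]
  rw [← Ioc_union_Ioi_eq_Ioi hρ, setIntegral_union Ioc_disjoint_Ioi_same measurableSet_Ioi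
      ((integrableOn_congr_fun hinside measurableSet_Ioc).2
        ((hf.mono_set Ioc_subset_Ioi_self).const_mul _))
      ((integrableOn_congr_fun houtside measurableSet_Ioi).2
        (hflog.mono_set (Ioi_subset_Ioi hρ))),
    setIntegral_congr_fun measurableSet_Ioc hinside,
    setIntegral_congr_fun measurableSet_Ioi houtside, integral_const_mul]

variable {φ : ℝ → ℝ}

lemma integrable_radial_mul_log_norm_sub (hφ : Measurable φ)
    (hint : IntegrableOn (fun r ↦ r * φ r) (Ioi 0))
    (hintlog : IntegrableOn (fun r ↦ r * φ r * log r) (Ioi 0)) (w : ℂ) :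
    Integrable fun a : ℂ ↦ φ ‖a‖ * log ‖a - w‖ := by
  refine (integrable_iff_circleAverage_norm (Measurable.stronglyMeasurable (by fun_prop))).2
    ⟨Eventually.of_forall fun r ↦
      circleIntegrable_radial_smul φ (circleIntegrable_log_norm_sub_const r), ?_⟩
  have hmeas : StronglyMeasurable (circleAverage (|log ‖· - w‖|) 0) :=
    stronglyMeasurable_circleAverage (Measurable.stronglyMeasurable (by fun_prop)) 0
  have hnonneg (r : ℝ) : 0 ≤ circleAverage (|log ‖· - w‖|) 0 r :=
    circleAverage_nonneg_of_nonneg fun z _ ↦ abs_nonneg _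
  have hdom : IntegrableOn (fun r ↦ r * φ r * circleAverage (|log ‖· - w‖|) 0 r) (Ioi 0) := by
    refine Integrable.mono' ((hint.norm.mul_const (2 * (log 2 + log⁺ ‖w‖))).add hintlog.norm)
      ((measurable_id.mul hφ).aestronglyMeasurable.mul hmeas.aestronglyMeasurable) ?_
    filter_upwards [ae_restrict_mem measurableSet_Ioi] with r hr
    rw [Pi.add_apply, norm_mul, norm_mul _ (log r), ← mul_add, norm_of_nonneg (hnonneg r)]
    gcongr
    exact circleAverage_abs_log_norm_sub_le w hr
  refine (integrableOn_congr_fun (fun r (hr : 0 < r) ↦ ?_) measurableSet_Ioi).2 hdom.norm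
  have haverage := circleAverage_radial_smul (|φ ·|) (|log ‖· - w‖|) r
  simp only [abs_of_pos hr, smul_eq_mul, ← abs_mul] at haverage
  simp only [norm_eq_abs]
  rw [haverage, abs_mul, abs_mul, abs_of_pos hr, abs_of_nonneg (hnonneg r), mul_assoc]

theorem integral_radial_mul_log_norm_sub (hφ : Measurable φ)
    (hint : IntegrableOn (fun r ↦ r * φ r) (Ioi 0))
    (hintlog : IntegrableOn (fun r ↦ r * φ r * log r) (Ioi 0)) (w : ℂ) :
    ∫ a : ℂ, φ ‖a‖ * log ‖a - w‖ =
      2 * π * (log ‖w‖ * (∫ r in Ioc 0 ‖w‖, r * φ r) + ∫ r in Ioi ‖w‖, r * φ r * log r) := by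
  rw [← integral_Ioi_mul_log_max (norm_nonneg w) hint hintlog,
    integral_eq_integral_circleAverage (integrable_radial_mul_log_norm_sub hφ hint hintlog w),
    smul_eq_mul]
  congr 1
  refine setIntegral_congr_fun measurableSet_Ioi fun r (hr : 0 < r) ↦ ?_
  have haverage := circleAverage_radial_smul φ (log ‖· - w‖) r
  rw [abs_of_pos hr, circleAverage_log_norm_sub w hr] at haverage
  simp only [smul_eq_mul, mul_assoc] at haverage ⊢
  rw [haverage]

end LogarithmicPotential

section SphericalDensity

lemma abs_mul_log_le_one_add_sq (r : ℝ) : |r * log r| ≤ 1 + r ^ 2 := by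
  rcases eq_or_ne r 0 with rfl | hr
  · simp
  have hr' : 0 < |r| := abs_pos.2 hr
  have hupper : log r ≤ |r| := log_abs r ▸ log_le_self hr'.le
  have hlower : -log r ≤ |r|⁻¹ := by
    rw [← log_inv, ← log_abs, abs_inv]
    exact log_le_self (inv_pos.2 hr').le
  calc |r * log r| = |r| * |log r| := abs_mul _ _
    _ ≤ |r| * (|r| + |r|⁻¹) := by
        gcongr
        exact abs_le'.2 ⟨by linarith [inv_pos.2 hr'], by linarith⟩
    _ = 1 + r ^ 2 := by
        rw [mul_add, mul_inv_cancel₀ hr'.ne', abs_mul_abs_self]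
        ring

lemma integrable_mul_inv_one_add_sq_sq : Integrable fun r : ℝ ↦ r * (1 + r ^ 2)⁻¹ ^ 2 := by
  refine integrable_inv_one_add_sq.mono'
    (Measurable.aestronglyMeasurable (by fun_prop)) (Eventually.of_forall fun r ↦ ?_)
  have habs : |r| ≤ 1 + r ^ 2 := by nlinarith [sq_abs r, sq_nonneg (|r| - 1), abs_nonneg r]
  calc ‖r * (1 + r ^ 2)⁻¹ ^ 2‖ = |r| * (1 + r ^ 2)⁻¹ ^ 2 := by
        rw [norm_mul, norm_of_nonneg (by positivity : 0 ≤ (1 + r ^ 2)⁻¹ ^ 2), norm_eq_abs]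
    _ ≤ (1 + r ^ 2) * (1 + r ^ 2)⁻¹ ^ 2 := by gcongr
    _ = (1 + r ^ 2)⁻¹ := by field_simp

lemma integrable_mul_inv_one_add_sq_sq_mul_log :
    Integrable fun r : ℝ ↦ r * (1 + r ^ 2)⁻¹ ^ 2 * log r := by
  refine integrable_inv_one_add_sq.mono'
    (Measurable.aestronglyMeasurable (by fun_prop)) (Eventually.of_forall fun r ↦ ?_)
  calc ‖r * (1 + r ^ 2)⁻¹ ^ 2 * log r‖ = |r * log r| * (1 + r ^ 2)⁻¹ ^ 2 := by
        rw [mul_right_comm, norm_mul, norm_of_nonneg (by positivity : 0 ≤ (1 + r ^ 2)⁻¹ ^ 2),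
          norm_eq_abs]
    _ ≤ (1 + r ^ 2) * (1 + r ^ 2)⁻¹ ^ 2 := by gcongr; exact abs_mul_log_le_one_add_sq r
    _ = (1 + r ^ 2)⁻¹ := by field_simp

lemma hasDerivAt_sq_mul_inv_one_add_sq (r : ℝ) :
    HasDerivAt (fun r : ℝ ↦ r ^ 2 * (1 + r ^ 2)⁻¹ / 2) (r * (1 + r ^ 2)⁻¹ ^ 2) r := by
  have hne : 1 + r ^ 2 ≠ 0 := by positivity
  have hsq := hasDerivAt_pow 2 r
  refine ((hsq.mul ((hsq.const_add 1).inv hne)).div_const 2).congr_deriv ?_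
  simp only [Pi.inv_apply]
  push_cast
  field_simp
  ring

lemma integral_Ioc_mul_inv_one_add_sq_sq {ρ : ℝ} (hρ : 0 ≤ ρ) :
    ∫ r in Ioc 0 ρ, r * (1 + r ^ 2)⁻¹ ^ 2 = ρ ^ 2 * (1 + ρ ^ 2)⁻¹ / 2 := by
  rw [← intervalIntegral.integral_of_le hρ, intervalIntegral.integral_eq_sub_of_hasDerivAt
    (fun r _ ↦ hasDerivAt_sq_mul_inv_one_add_sq r)
    integrable_mul_inv_one_add_sq_sq.intervalIntegrable]
  simp

/-- The primitive of `r log r / (1 + r²)²` on `(0, ∞)` that vanishes at `0` and at infinity. -/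
noncomputable def logSphericalPrimitive (r : ℝ) : ℝ :=
  r ^ 2 * (1 + r ^ 2)⁻¹ / 2 * log r - log (1 + r ^ 2) / 4

lemma continuous_logSphericalPrimitive : Continuous logSphericalPrimitive := by
  have hfactor : logSphericalPrimitive =
      fun r ↦ r * (1 + r ^ 2)⁻¹ / 2 * (r * log r) - log (1 + r ^ 2) / 4 := by
    ext r
    rw [logSphericalPrimitive]
    ring
  have hne : ∀ r : ℝ, 1 + r ^ 2 ≠ 0 := fun r ↦ by positivity
  have hweight : Continuous fun r : ℝ ↦ r * (1 + r ^ 2)⁻¹ / 2 := by fun_prop (disch := assumption)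
  have hlog : Continuous fun r : ℝ ↦ log (1 + r ^ 2) / 4 := by fun_prop (disch := assumption)
  rw [hfactor]
  exact (hweight.mul continuous_mul_log).sub hlog

lemma hasDerivAt_logSphericalPrimitive {r : ℝ} (hr : r ≠ 0) :
    HasDerivAt logSphericalPrimitive (r * (1 + r ^ 2)⁻¹ ^ 2 * log r) r := by
  have hne : 1 + r ^ 2 ≠ 0 := by positivity
  refine (((hasDerivAt_sq_mul_inv_one_add_sq r).mul (hasDerivAt_log hr)).sub
    ((((hasDerivAt_pow 2 r).const_add 1).log hne).div_const 4)).congr_deriv ?_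
  push_cast
  field_simp
  ring

lemma tendsto_logSphericalPrimitive_atTop : Tendsto logSphericalPrimitive atTop (𝓝 0) := by
  have hsq : Tendsto (fun r : ℝ ↦ r ^ 2) atTop atTop := tendsto_pow_atTop two_ne_zero
  have hdiv : Tendsto (fun r : ℝ ↦ log (r ^ 2) / (r ^ 2 + 1)) atTop (𝓝 0) := by
    simpa only [pow_one, one_mul, Function.comp_def] using
      (tendsto_pow_log_div_mul_add_atTop 1 1 1 one_ne_zero).comp hsq
  have hsub : Tendsto (fun r : ℝ ↦ log (r ^ 2 + 1) - log (r ^ 2)) atTop (𝓝 0) :=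
    (tendsto_log_comp_add_sub_log 1).comp hsq
  have hlim := (hdiv.add hsub).const_mul (-1 / 4)
  rw [add_zero, mul_zero] at hlim
  refine hlim.congr fun r ↦ ?_
  have hne : r ^ 2 + 1 ≠ 0 := by positivity
  rw [logSphericalPrimitive, add_comm 1, log_pow]
  push_cast
  field_simp
  ring

lemma integral_Ioi_mul_inv_one_add_sq_sq_mul_log {ρ : ℝ} (hρ : 0 ≤ ρ) :
    ∫ r in Ioi ρ, r * (1 + r ^ 2)⁻¹ ^ 2 * log r = -logSphericalPrimitive ρ := by
  rw [integral_Ioi_of_hasDerivAt_of_tendsto continuous_logSphericalPrimitive.continuousWithinAt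
    (fun r hr ↦ hasDerivAt_logSphericalPrimitive (hρ.trans_lt hr).ne')
    integrable_mul_inv_one_add_sq_sq_mul_log.integrableOn tendsto_logSphericalPrimitive_atTop,
    zero_sub]

end SphericalDensity

/-- **Potential of the spherical measure.** For `w ∈ ℂ`,
`(1/π) ∫_ℂ log|w − a| (1+|a|²)⁻² dm(a) = (1/2) log(1+|w|²)`,
where `dm` is Lebesgue area measure on `ℂ`. -/
theorem spherical_potential (w : ℂ) :
    (1 / Real.pi) * ∫ a : ℂ, Real.log ‖w - a‖ * (1 + ‖a‖ ^ 2)⁻¹ ^ 2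
      = (1 / 2) * Real.log (1 + ‖w‖ ^ 2) := by
  have hNewton := integral_radial_mul_log_norm_sub (φ := fun r ↦ (1 + r ^ 2)⁻¹ ^ 2)
    (by fun_prop) integrable_mul_inv_one_add_sq_sq.integrableOn
    integrable_mul_inv_one_add_sq_sq_mul_log.integrableOn w
  rw [integral_Ioc_mul_inv_one_add_sq_sq (norm_nonneg w),
    integral_Ioi_mul_inv_one_add_sq_sq_mul_log (norm_nonneg w), logSphericalPrimitive] at hNewton
  simp only [norm_sub_rev w, mul_comm (log _)]
  rw [hNewton]
  field_simp
  ring
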